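/- Assume H is 2q-observable and 2q ≤ m, and fix y ∈ ℝ^m. The function φ ↦ rad(X(y,φ)) is strictly increasing wherever it is positive: for all real numbers φ₁ < φ₂, if rad(X(y,φ₁)) > 0 then rad(X(y,φ₁)) < rad(X(y,φ₂)). -/

import Mathlib

/-- The inconsistency `d_x(y)`. -/
noncomputable def dinc (m n q : ℕ) (H : Matrix (Fin m) (Fin n) ℝ) (W : Fin m → ℝ)
    (x : EuclideanSpace ℝ (Fin n)) (y : Fin m → ℝ) : ℝ :=
  sInf { v : ℝ | ∃ a : Fin m → ℝ, (Function.support a).ncard ≤ q ∧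
    v = (1 / 2 : ℝ) * ∑ i, (y i - (∑ j, H i j * x j) + a i) ^ 2 / W i }

/-- The sublevel set `X(y,φ) := {x : d_x(y) ≤ φ}`. -/
noncomputable def sublevel (m n q : ℕ) (H : Matrix (Fin m) (Fin n) ℝ) (W : Fin m → ℝ)
    (y : Fin m → ℝ) (φ : ℝ) : Set (EuclideanSpace ℝ (Fin n)) :=
  { x | dinc m n q H W x y ≤ φ }

/-- The radius `rad(A) := inf_c sup_{x ∈ A} ‖x − c‖₂` (with `rad ∅ = 0`). -/
noncomputable def rad (n : ℕ) (A : Set (EuclideanSpace ℝ (Fin n))) : ℝ :=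
  ⨅ c : EuclideanSpace ℝ (Fin n), ⨆ x ∈ A, dist x c

/-- `H` is `2q`-observable. -/
def TwoQObservable (m n q : ℕ) (H : Matrix (Fin m) (Fin n) ℝ) : Prop :=
  2 * q ≤ m ∧ ∀ I : Finset (Fin m), I.card = m - 2 * q →
    (Matrix.of fun (i : { i // i ∈ I }) (j : Fin n) => H i.1 j).rank = n

/-!
For fixed `x`, the cheapest sparse attack cancels the residuals of the sensors it touches, so
`d_x(y)` is the minimum, over the sets `I` of at least `m - q` trusted sensors, of the least-squares
residual of `I`. Hence `x ↦ d_x(y)` is continuous, and observability makes its sublevel sets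
compact. By continuity `X(y,φ₁)` lies in the interior of `X(y,φ₂)`, so by compactness some
`δ`-neighbourhood of `X(y,φ₁)` lies in `X(y,φ₂)`. Whatever the centre `c`, pushing a point of
`X(y,φ₁)` away from `c` by `δ` stays in `X(y,φ₂)`, so the radius grows by at least `δ`.
-/

open Metric Bornology Function
open scoped Matrix Finset

section FarthestDistance

lemma dist_le_biSup_dist {α : Type*} [PseudoMetricSpace α] {A : Set α} (hA : IsBounded A)
    {x : α} (hx : x ∈ A) (c : α) : dist x c ≤ ⨆ x ∈ A, dist x c := by
  obtain ⟨R, hR⟩ := hA.subset_closedBall c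
  have hbdd : BddAbove (⋃ x, Set.range fun _ : x ∈ A => dist x c) := by
    refine ⟨R, fun r hr => ?_⟩
    obtain ⟨z, hz, rfl⟩ := Set.mem_iUnion.1 hr
    exact hR hz
  exact le_ciSup₂ (f := fun x (_ : x ∈ A) => dist x c) hbdd x hx

variable {E : Type*} [NormedAddCommGroup E] [NormedSpace ℝ E] [Nontrivial E]

lemma exists_norm_eq_one_and_eq_norm_smul (v : E) : ∃ u : E, ‖u‖ = 1 ∧ v = ‖v‖ • u := by
  rcases eq_or_ne v 0 with rfl | hv
  · obtain ⟨u, hu⟩ := exists_norm_eq E zero_le_one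
    exact ⟨u, hu, by simp⟩
  · exact ⟨‖v‖⁻¹ • v, norm_smul_inv_norm hv, (smul_inv_smul₀ (norm_ne_zero_iff.2 hv) v).symm⟩

lemma exists_dist_eq_and_dist_eq_add (x c : E) {r : ℝ} (hr : 0 ≤ r) :
    ∃ z, dist z x = r ∧ dist z c = dist x c + r := by
  obtain ⟨u, hu, hxc⟩ := exists_norm_eq_one_and_eq_norm_smul (x - c)
  refine ⟨x + r • u, by simp [norm_smul, hu, abs_of_nonneg hr], ?_⟩
  have hray : x + r • u - c = (‖x - c‖ + r) • u := by
    rw [add_smul, ← hxc]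
    abel
  rw [dist_eq_norm, dist_eq_norm, hray, norm_smul, hu, mul_one, Real.norm_of_nonneg (by positivity)]

lemma biSup_dist_add_le {A B : Set E} {δ : ℝ} (hA : A.Nonempty) (hB : IsBounded B) (hδ : 0 ≤ δ)
    (hAB : cthickening δ A ⊆ B) (c : E) : (⨆ x ∈ A, dist x c) + δ ≤ ⨆ x ∈ B, dist x c := by
  have hpush : ∀ x ∈ A, dist x c + δ ≤ ⨆ x ∈ B, dist x c := by
    intro x hx
    obtain ⟨z, hzx, hzc⟩ := exists_dist_eq_and_dist_eq_add x c hδ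
    rw [← hzc]
    exact dist_le_biSup_dist hB (hAB (mem_cthickening_of_dist_le z x δ A hx hzx.le)) c
  obtain ⟨x₀, hx₀⟩ := hA
  have hnonneg : 0 ≤ (⨆ x ∈ B, dist x c) - δ := by
    linarith [hpush x₀ hx₀, dist_nonneg (x := x₀) (y := c)]
  rw [← le_sub_iff_add_le]
  exact Real.iSup_le (fun x => Real.iSup_le (fun hx => le_sub_iff_add_le.2 (hpush x hx)) hnonneg)
    hnonneg

end FarthestDistance

section Radius

variable {n : ℕ} {A B : Set (EuclideanSpace ℝ (Fin n))}

lemma rad_le_biSup_dist (A : Set (EuclideanSpace ℝ (Fin n))) (c : EuclideanSpace ℝ (Fin n)) :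
    rad n A ≤ ⨆ x ∈ A, dist x c := by
  refine ciInf_le ⟨0, ?_⟩ c
  rintro _ ⟨c, rfl⟩
  exact Real.iSup_nonneg fun x => Real.iSup_nonneg fun _ => dist_nonneg

lemma nonempty_of_rad_pos (hA : 0 < rad n A) : A.Nonempty := by
  rw [Set.nonempty_iff_ne_empty]
  rintro rfl
  simp [rad] at hA

lemma rad_add_le_of_cthickening_subset {δ : ℝ} (hn : 1 ≤ n) (hA : A.Nonempty) (hB : IsBounded B)
    (hδ : 0 ≤ δ) (hAB : cthickening δ A ⊆ B) : rad n A + δ ≤ rad n B := by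
  have : NeZero n := ⟨Nat.one_le_iff_ne_zero.1 hn⟩
  exact le_ciInf fun c =>
    (add_le_add_left (rad_le_biSup_dist A c) δ).trans (biSup_dist_add_le hA hB hδ hAB c)

lemma rad_lt_rad_of_subset_interior (hn : 1 ≤ n) (hA : A.Nonempty) (hAc : IsCompact A)
    (hB : IsBounded B) (hAB : A ⊆ interior B) : rad n A < rad n B := by
  obtain ⟨δ, hδ, hsub⟩ := hAc.exists_cthickening_subset_open isOpen_interior hAB
  linarith [rad_add_le_of_cthickening_subset hn hA hB hδ.le (hsub.trans interior_subset)]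

end Radius

section SparseAttacks

variable {ι : Type*} [Fintype ι]

lemma card_zeros_add_ncard_support {M : Type*} [Zero M] [DecidableEq M] (a : ι → M) :
    #{i | a i = 0} + (support a).ncard = Fintype.card ι := by
  have hsupp : support a = ({i | a i ≠ 0} : Finset ι) := by ext; simp
  rw [hsupp, Set.ncard_coe_finset, Finset.card_filter_add_card_filter_not, Finset.card_univ]

lemma sum_zeros_le_sum_add_sq_div {W : ι → ℝ} (hW : ∀ i, 0 ≤ W i) (r a : ι → ℝ) :
    ∑ i with a i = 0, r i ^ 2 / W i ≤ ∑ i, (r i + a i) ^ 2 / W i :=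
  calc ∑ i with a i = 0, r i ^ 2 / W i
      = ∑ i with a i = 0, (r i + a i) ^ 2 / W i :=
        Finset.sum_congr rfl fun i hi => by rw [(Finset.mem_filter.1 hi).2, add_zero]
    _ ≤ ∑ i, (r i + a i) ^ 2 / W i :=
        Finset.sum_le_univ_sum_of_nonneg fun i => div_nonneg (sq_nonneg _) (hW i)

lemma sum_add_indicator_compl_neg_sq_div (W r : ι → ℝ) (I : Finset ι) :
    ∑ i, (r i + (I : Set ι)ᶜ.indicator (-r) i) ^ 2 / W i = ∑ i ∈ I, r i ^ 2 / W i := by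
  rw [← Finset.sum_subset I.subset_univ fun i _ hi => by simp [hi]]
  exact Finset.sum_congr rfl fun i hi => by simp [hi]

lemma ncard_support_indicator_compl_le {M : Type*} [Zero M] {q : ℕ} {I : Finset ι}
    (hI : Fintype.card ι ≤ #I + q) (r : ι → M) :
    (support ((I : Set ι)ᶜ.indicator r)).ncard ≤ q := by
  classical
  refine (Set.ncard_le_ncard Set.support_indicator_subset (Set.toFinite _)).trans ?_
  rw [← Finset.coe_compl, Set.ncard_coe_finset, Finset.card_compl]
  omega

end SparseAttacks

section Observability

lemma mulVec_injective_of_rank_eq_card {ι κ K : Type*} [Fintype κ] [Field K] {A : Matrix ι κ K}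
    (hA : A.rank = Fintype.card κ) : Injective A.mulVec := by
  have hker := LinearMap.finrank_range_add_finrank_ker A.mulVecLin
  rw [← Matrix.rank, hA, Module.finrank_fintype_fun_eq_card, add_eq_left,
    Submodule.finrank_eq_zero] at hker
  exact LinearMap.ker_eq_bot.1 hker

variable {ι κ : Type*} [Fintype ι] [Fintype κ]

/-- `k`-observability: `H` keeps full column rank after the deletion of any `k` of its rows. The
condition `card ι ≤ #I + k` on the remaining rows `I` avoids the truncated difference
`card ι - k`. -/
def SparseObservable (k : ℕ) (H : Matrix ι κ ℝ) : Prop :=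
  ∀ I : Finset ι, Fintype.card ι ≤ #I + k →
    (H.submatrix ((↑) : I → ι) id).rank = Fintype.card κ

lemma SparseObservable.anti {k l : ℕ} {H : Matrix ι κ ℝ} (hkl : k ≤ l)
    (hH : SparseObservable l H) : SparseObservable k H :=
  fun I hI => hH I (by omega)

lemma TwoQObservable.sparseObservable {m n q : ℕ} {H : Matrix (Fin m) (Fin n) ℝ}
    (hH : TwoQObservable m n q H) : SparseObservable (2 * q) H := by
  intro I hI
  rw [Fintype.card_fin] at hI
  obtain ⟨J, hJI, hJ⟩ := Finset.exists_subset_card_eq (s := I) (n := m - 2 * q) (by omega)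
  refine (Matrix.rank_le_card_width _).antisymm ?_
  calc Fintype.card (Fin n)
      = (H.submatrix ((↑) : J → Fin m) id).rank := (Fintype.card_fin n).trans (hH.2 J hJ).symm
    _ ≤ (H.submatrix ((↑) : I → Fin m) id).rank :=
        (H.submatrix ((↑) : I → Fin m) id).rank_submatrix_le (Set.inclusion hJI) id

lemma exists_antilipschitzWith_mulVec {A : Matrix ι κ ℝ} (hA : A.rank = Fintype.card κ) :
    ∃ K, AntilipschitzWith K fun x : EuclideanSpace ℝ κ => A *ᵥ x.ofLp := by
  let L : EuclideanSpace ℝ κ →ₗ[ℝ] ι → ℝ :=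
    A.mulVecLin ∘ₗ (WithLp.linearEquiv 2 ℝ (κ → ℝ)).toLinearMap
  have hL : LinearMap.ker L = ⊥ :=
    LinearMap.ker_eq_bot.2 ((mulVec_injective_of_rank_eq_card hA).comp (WithLp.ofLp_injective 2))
  obtain ⟨K, -, hK⟩ := L.exists_antilipschitzWith hL
  exact ⟨K, hK⟩

end Observability

section TrustedResidual

variable {ι κ : Type*} [Fintype κ]

/-- The weighted least-squares residual of the state `x` on the set `I` of trusted sensors, that is,
with every sensor outside `I` ignored. -/
noncomputable def trustedResidual (H : Matrix ι κ ℝ) (W y : ι → ℝ) (I : Finset ι)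
    (x : EuclideanSpace ℝ κ) : ℝ :=
  (1 / 2 : ℝ) * ∑ i ∈ I, (y i - ∑ j, H i j * x j) ^ 2 / W i

lemma continuous_trustedResidual (H : Matrix ι κ ℝ) (W y : ι → ℝ) (I : Finset ι) :
    Continuous (trustedResidual H W y I) := by
  unfold trustedResidual
  simp only [div_eq_mul_inv]
  fun_prop

lemma abs_sub_le_sqrt_of_trustedResidual_le {H : Matrix ι κ ℝ} {W : ι → ℝ} (hW : ∀ i, 0 < W i)
    {y : ι → ℝ} {I : Finset ι} {x : EuclideanSpace ℝ κ} {φ : ℝ}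
    (hx : trustedResidual H W y I x ≤ φ) {i : ι} (hi : i ∈ I) :
    |y i - ∑ j, H i j * x j| ≤ √(2 * φ * W i) := by
  apply Real.abs_le_sqrt
  have hterm : (y i - ∑ j, H i j * x j) ^ 2 / W i ≤ ∑ i ∈ I, (y i - ∑ j, H i j * x j) ^ 2 / W i :=
    Finset.single_le_sum (f := fun i => (y i - ∑ j, H i j * x j) ^ 2 / W i)
      (fun i _ => div_nonneg (sq_nonneg _) (hW i).le) hi
  rw [← div_le_iff₀ (hW i)]
  unfold trustedResidual at hx
  linarith

lemma isBounded_setOf_trustedResidual_le {H : Matrix ι κ ℝ} {W : ι → ℝ} (hW : ∀ i, 0 < W i)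
    (y : ι → ℝ) {I : Finset ι} (hI : (H.submatrix ((↑) : I → ι) id).rank = Fintype.card κ) (φ : ℝ) :
    IsBounded {x | trustedResidual H W y I x ≤ φ} := by
  obtain ⟨K, hK⟩ := exists_antilipschitzWith_mulVec hI
  have hbox : IsBounded (Set.univ.pi fun i : I => closedBall (y i) √(2 * φ * W i)) :=
    IsBounded.pi fun _ => isBounded_closedBall
  refine (hK.isBounded_preimage hbox).subset fun x hx i _ => ?_
  rw [mem_closedBall, dist_comm, Real.dist_eq]
  exact abs_sub_le_sqrt_of_trustedResidual_le hW hx i.2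

end TrustedResidual

section Inconsistency

variable {m n q : ℕ} {H : Matrix (Fin m) (Fin n) ℝ} {W : Fin m → ℝ}

/-- The sets of at least `m - q` sensors: those that some attack on at most `q` sensors leaves
untouched. -/
def trustedSets (m q : ℕ) : Finset (Finset (Fin m)) :=
  {I | m ≤ #I + q}

lemma mem_trustedSets {I : Finset (Fin m)} : I ∈ trustedSets m q ↔ m ≤ #I + q := by
  simp [trustedSets]

lemma trustedSets_nonempty (m q : ℕ) : (trustedSets m q).Nonempty :=
  ⟨Finset.univ, by simp [mem_trustedSets]⟩

lemma dinc_le_trustedResidual (hW : ∀ i, 0 < W i) {I : Finset (Fin m)} (hI : I ∈ trustedSets m q)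
    (x : EuclideanSpace ℝ (Fin n)) (y : Fin m → ℝ) :
    dinc m n q H W x y ≤ trustedResidual H W y I x := by
  refine csInf_le ⟨0, ?_⟩ ?_
  · rintro _ ⟨a, -, rfl⟩
    exact mul_nonneg (by norm_num)
      (Finset.sum_nonneg fun i _ => div_nonneg (sq_nonneg _) (hW i).le)
  · let r : Fin m → ℝ := fun i => y i - ∑ j, H i j * x j
    refine ⟨(I : Set (Fin m))ᶜ.indicator (-r), ncard_support_indicator_compl_le ?_ _, ?_⟩
    · rw [Fintype.card_fin]
      exact mem_trustedSets.1 hI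
    · rw [sum_add_indicator_compl_neg_sq_div W r I, trustedResidual]

lemma le_dinc_of_forall_le_trustedResidual (hW : ∀ i, 0 < W i) {x : EuclideanSpace ℝ (Fin n)}
    {y : Fin m → ℝ} {v : ℝ} (hv : ∀ I ∈ trustedSets m q, v ≤ trustedResidual H W y I x) :
    v ≤ dinc m n q H W x y := by
  refine le_csInf ⟨_, 0, by simp, rfl⟩ ?_
  rintro _ ⟨a, ha, rfl⟩
  have hzeros : ({i | a i = 0} : Finset (Fin m)) ∈ trustedSets m q := by
    have hcard := card_zeros_add_ncard_support a
    rw [Fintype.card_fin] at hcard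
    exact mem_trustedSets.2 (by omega)
  exact (hv _ hzeros).trans <| mul_le_mul_of_nonneg_left
    (sum_zeros_le_sum_add_sq_div (fun i => (hW i).le) (fun i => y i - ∑ j, H i j * x j) a)
    (by norm_num)

theorem dinc_eq_inf'_trustedResidual (hW : ∀ i, 0 < W i) (x : EuclideanSpace ℝ (Fin n))
    (y : Fin m → ℝ) :
    dinc m n q H W x y =
      (trustedSets m q).inf' (trustedSets_nonempty m q) fun I => trustedResidual H W y I x :=
  (Finset.le_inf' _ _ fun _ hI => dinc_le_trustedResidual hW hI x y).antisymm
    (le_dinc_of_forall_le_trustedResidual hW fun _ hI => Finset.inf'_le _ hI)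

lemma continuous_dinc (hW : ∀ i, 0 < W i) (y : Fin m → ℝ) :
    Continuous fun x => dinc m n q H W x y := by
  simp only [dinc_eq_inf'_trustedResidual hW]
  exact Continuous.finset_inf'_apply _ fun I _ => continuous_trustedResidual H W y I

lemma sublevel_eq_biUnion (hW : ∀ i, 0 < W i) (y : Fin m → ℝ) (φ : ℝ) :
    sublevel m n q H W y φ = ⋃ I ∈ trustedSets m q, {x | trustedResidual H W y I x ≤ φ} := by
  ext x
  simp [sublevel, dinc_eq_inf'_trustedResidual hW, Finset.inf'_le_iff]

lemma isBounded_sublevel (hW : ∀ i, 0 < W i) (hH : SparseObservable q H) (y : Fin m → ℝ) (φ : ℝ) :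
    IsBounded (sublevel m n q H W y φ) := by
  rw [sublevel_eq_biUnion hW, isBounded_biUnion_finset]
  intro I hI
  refine isBounded_setOf_trustedResidual_le hW y (hH I ?_) φ
  rw [Fintype.card_fin]
  exact mem_trustedSets.1 hI

lemma isCompact_sublevel (hW : ∀ i, 0 < W i) (hH : SparseObservable q H) (y : Fin m → ℝ) (φ : ℝ) :
    IsCompact (sublevel m n q H W y φ) :=
  isCompact_of_isClosed_isBounded (isClosed_le (continuous_dinc hW y) continuous_const)
    (isBounded_sublevel hW hH y φ)

lemma sublevel_subset_interior_sublevel (hW : ∀ i, 0 < W i) (y : Fin m → ℝ) {φ₁ φ₂ : ℝ}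
    (hφ : φ₁ < φ₂) : sublevel m n q H W y φ₁ ⊆ interior (sublevel m n q H W y φ₂) := by
  have hopen : IsOpen {x | dinc m n q H W x y < φ₂} :=
    isOpen_lt (continuous_dinc hW y) continuous_const
  exact fun x hx => interior_maximal (fun z hz => le_of_lt hz) hopen (lt_of_le_of_lt hx hφ)

theorem stmt_6_general (hn : 1 ≤ n) (hW : ∀ i, 0 < W i) (hH : SparseObservable q H)
    (y : Fin m → ℝ) {φ₁ φ₂ : ℝ} (hφ : φ₁ < φ₂) (hne : (sublevel m n q H W y φ₁).Nonempty) :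
    rad n (sublevel m n q H W y φ₁) < rad n (sublevel m n q H W y φ₂) :=
  rad_lt_rad_of_subset_interior hn hne (isCompact_sublevel hW hH y φ₁)
    (isBounded_sublevel hW hH y φ₂) (sublevel_subset_interior_sublevel hW y hφ)

end Inconsistency

/-- `φ ↦ rad(X(y,φ))` is strictly increasing wherever it is
positive: for `φ₁ < φ₂`, if `rad(X(y,φ₁)) > 0` then
`rad(X(y,φ₁)) < rad(X(y,φ₂))`. -/
theorem stmt_6 (m n q : ℕ) (hm : 1 ≤ m) (hn : 1 ≤ n) (hq : q ≤ m)
    (H : Matrix (Fin m) (Fin n) ℝ) (W : Fin m → ℝ) (hW : ∀ i, 0 < W i)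
    (hobs : TwoQObservable m n q H) (y : Fin m → ℝ) :
    ∀ φ₁ φ₂ : ℝ, φ₁ < φ₂ → 0 < rad n (sublevel m n q H W y φ₁) →
      rad n (sublevel m n q H W y φ₁) < rad n (sublevel m n q H W y φ₂) := by
  intro φ₁ φ₂ hφ hpos
  exact stmt_6_general hn hW (hobs.sparseObservable.anti (Nat.le_mul_of_pos_left q two_pos)) y hφ
    (nonempty_of_rad_pos hpos)
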